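/- For any initialized pair (v₀,v) of clock valuations and any set of clock resets r ⊆ K⁺: reset_r([(v₀,v)], int(v)) = ([(v₀,v↓_r)], int(v↓_r)). -/

import Mathlib

open scoped BigOperators

namespace PTApaper

/-! ## Clock valuations -/

/-- A (raw) clock valuation on clocks `x_0, …, x_k`. -/
abbrev Val (k : ℕ) := Fin (k+1) → ℝ

/-- A discrete clock valuation. -/
abbrev DVal (k : ℕ) := Fin (k+1) → ℕ

/-- A clock valuation takes nonnegative values. -/
def IsVal {k : ℕ} (v : Val k) : Prop := ∀ i, 0 ≤ v i

/-- A valuation is initial if the auxiliary clock `x_0` has value 0. -/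
def Initial {k : ℕ} (v : Val k) : Prop := v 0 = 0

/-- The integral part `int(v)` of a valuation. -/
noncomputable def intPart {k : ℕ} (v : Val k) : DVal k := fun i => (⌊v i⌋).toNat

/-- The fractional parts of the relative representation `rel(v)`:
`fract(rel(v))(0) = fract (1 - fract (v 0))` and
`fract(rel(v))(i) = fract (fract (v i) + fract(rel(v))(0))` for `i ∈ K⁺`. -/
noncomputable def relFract {k : ℕ} (v : Val k) : Fin (k+1) → ℝ := fun i =>
  if i = 0 then Int.fract (1 - Int.fract (v 0))
  else Int.fract (Int.fract (v i) + Int.fract (1 - Int.fract (v 0)))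

/-- Synchronous clock progress `v + δ`. -/
def shift {k : ℕ} (v : Val k) (δ : ℝ) : Val k := fun i => v i + δ

/-- Clock reset `v↓_r`. -/
def resetVal {k : ℕ} (r : Finset (Fin (k+1))) (v : Val k) : Val k :=
  fun i => if i ∈ r then 0 else v i

/-! ## Patterns -/

/-- A raw pattern: a finite sequence of subsets of `K⁰ ∪ K¹`, where the index
`(i, false)` stands for `i⁰` and `(i, true)` stands for `i¹`. -/
abbrev PatSeq (k : ℕ) := List (Finset (Fin (k+1) × Bool))

/-- The well-formedness conditions making `η = p₀,…,p_n` a pattern: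
`0 ≤ n < 2(k+1)`, the `p_m` are nonempty and pairwise disjoint, `0⁰ ∈ p₀`,
and `p₀ ∪ … ∪ p_n = K⁰ ∪ K¹`. -/
def IsPattern {k : ℕ} (η : PatSeq k) : Prop :=
  η.length ≤ 2*(k+1) ∧
  (∀ p ∈ η, p.Nonempty) ∧
  η.Pairwise Disjoint ∧
  ((0 : Fin (k+1)), false) ∈ η.getD 0 ∅ ∧
  (∀ x : Fin (k+1) × Bool, ∃ p ∈ η, x ∈ p)

/-- `bval v₀ v₁ b` is `v_b`. -/
def bval {k : ℕ} (v₀ v₁ : Val k) : Bool → Val k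
  | false => v₀
  | true => v₁

/-- The defining ordering condition for "`(v₀,v₁)` has pattern `η = p₀,…,p_n`":
for all positions `m, m'`, copies `b, b'` and clocks `i, i'` with `i^b ∈ p_m` and
`i'^{b'} ∈ p_{m'}`, `fract(rel(v_b))(i) = fract(rel(v_{b'}))(i')` iff `m = m'`, and
`fract(rel(v_b))(i) < fract(rel(v_{b'}))(i')` iff `m < m'`. -/
def HasPatternOrd {k : ℕ} (v₀ v₁ : Val k) (η : PatSeq k) : Prop :=
  ∀ m m' : Fin η.length, ∀ b b' : Bool, ∀ i i' : Fin (k+1),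
    (i, b) ∈ η.get m → (i', b') ∈ η.get m' →
      ((relFract (bval v₀ v₁ b) i = relFract (bval v₀ v₁ b') i' ↔ m = m') ∧
       (relFract (bval v₀ v₁ b) i < relFract (bval v₀ v₁ b') i' ↔ (m : ℕ) < (m' : ℕ)))

/-- `(v₀,v₁)` has pattern `η` (written `[(v₀,v₁)] = η`). -/
def PatternOf {k : ℕ} (v₀ v₁ : Val k) (η : PatSeq k) : Prop :=
  IsPattern η ∧ HasPatternOrd v₀ v₁ η

/-- A pattern is initial if it is the pattern of `(v₀,v₀)` for some initial valuation `v₀`. -/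
def InitialPattern {k : ℕ} (η : PatSeq k) : Prop :=
  ∃ v₀ : Val k, IsVal v₀ ∧ Initial v₀ ∧ PatternOf v₀ v₀ η

/-- The equivalence `(v₀¹,v₁) ≈ (v₀²,v₂)`: same pattern and same integral parts. -/
def PairEquiv {k : ℕ} (va vb vc vd : Val k) : Prop :=
  (∃ η : PatSeq k, PatternOf va vb η ∧ PatternOf vc vd η) ∧
  intPart va = intPart vc ∧ intPart vb = intPart vd

/-! ## now-position, Next, next, reset -/

/-- The index of the now-position, i.e. the position containing `0¹`. -/
def nowIdx {k : ℕ} (η : PatSeq k) : ℕ :=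
  η.findIdx fun p => decide (((0 : Fin (k+1)), true) ∈ p)

/-- A merge-pattern: the now-position is the singleton `{0¹}`. -/
def IsMergePat {k : ℕ} (η : PatSeq k) : Prop :=
  η.getD (nowIdx η) ∅ = ({((0 : Fin (k+1)), true)} : Finset (Fin (k+1) × Bool))

/-- A split-pattern: a pattern that is not a merge-pattern. -/
def IsSplitPat {k : ℕ} (η : PatSeq k) : Prop := ¬ IsMergePat η

/-- The next pattern `Next(η)`. -/
def NextPat {k : ℕ} (η : PatSeq k) : PatSeq k :=
  let i := nowIdx η
  if η.getD i ∅ = ({((0 : Fin (k+1)), true)} : Finset (Fin (k+1) × Bool)) then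
    -- merge case : `p₀, …, p_{i-1} ∪ {0¹}, p_{i+1}, …, p_n`
    η.take (i-1) ++ [η.getD (i-1) ∅ ∪ {((0 : Fin (k+1)), true)}] ++ η.drop (i+1)
  else if i = 0 then
    -- split case with `i = 0` : `p₀ ∖ {0¹}, p₁, …, p_n, {0¹}`
    (η.getD 0 ∅ \ {((0 : Fin (k+1)), true)}) :: (η.drop 1 ++ [{((0 : Fin (k+1)), true)}])
  else
    -- split case with `i > 0` : `p₀, …, p_{i-1}, {0¹}, p_i ∖ {0¹}, p_{i+1}, …, p_n`
    η.take i ++ [{((0 : Fin (k+1)), true)}, η.getD i ∅ \ {((0 : Fin (k+1)), true)}]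
      ++ η.drop (i+1)

/-- The counter update of `next(η,u)`. -/
def nextD {k : ℕ} (η : PatSeq k) (u : DVal k) : DVal k :=
  let i := nowIdx η
  if η.getD i ∅ = ({((0 : Fin (k+1)), true)} : Finset (Fin (k+1) × Bool)) then
    fun j =>
      if j = 0 then (if i = 1 then u 0 + 1 else u 0)
      else (if (j, true) ∈ η.getD (i-1) ∅ then u j + 1 else u j)
  else u

/-- `next(η,u)`. -/
def nextPair {k : ℕ} (η : PatSeq k) (u : DVal k) : PatSeq k × DVal k :=
  (NextPat η, nextD η u)

/-- The pattern part of `reset_r(η,u)`: all indices `j¹`, `j ∈ r`, are moved into the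
now-position, and entries that become empty are deleted. -/
def ResetPat {k : ℕ} (r : Finset (Fin (k+1))) (η : PatSeq k) : PatSeq k :=
  let r1 : Finset (Fin (k+1) × Bool) := r.image (fun j => (j, true))
  let i := nowIdx η
  (η.mapIdx (fun m p => if m = i then p ∪ r1 else p \ r1)).filter (fun p => decide (p ≠ ∅))

/-- The counter update of `reset_r(η,u)`. -/
def resetD {k : ℕ} (r : Finset (Fin (k+1))) (u : DVal k) : DVal k :=
  fun j => if j ∈ r then 0 else u j

/-- `reset_r(η,u)`. -/
def resetPair {k : ℕ} (r : Finset (Fin (k+1))) (η : PatSeq k) (u : DVal k) :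
    PatSeq k × DVal k :=
  (ResetPat r η, resetD r u)

/-! ## Pattern changes -/

/-- `v` has no pattern change for `δ`. -/
def NoChange {k : ℕ} (v₀ v : Val k) (δ : ℝ) : Prop :=
  ∃ η : PatSeq k, PatternOf v₀ v η ∧
    ∀ δ', 0 ≤ δ' → δ' ≤ δ → PatternOf v₀ (shift v δ') η

/-- `v` has one pattern change for `δ`. -/
def OneChange {k : ℕ} (v₀ v : Val k) (δ : ℝ) : Prop :=
  ∃ η η' : PatSeq k, PatternOf v₀ v η ∧ PatternOf v₀ (shift v δ) η' ∧
    NextPat η = η' ∧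
    ((∀ δ', 0 < δ' → δ' < δ → PatternOf v₀ (shift v δ') η) ∨
     (∀ δ', 0 < δ' → δ' < δ → PatternOf v₀ (shift v δ') η'))

/-- `v` has `n` pattern changes for `δ` (for `n ≥ 1`): `δ = δ₁ + … + δ_n` with each
`δ_j > 0` and `v + δ₁ + … + δ_j` has one pattern change for `δ_{j+1}`. -/
def NChanges {k : ℕ} (v₀ v : Val k) (n : ℕ) (δ : ℝ) : Prop :=
  ∃ d : ℕ → ℝ, (∀ j < n, 0 < d j) ∧ (∑ j ∈ Finset.range n, d j) = δ ∧
    ∀ j < n, OneChange v₀ (shift v (∑ j' ∈ Finset.range j, d j')) (d j)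

/-! ## Clock constraints -/

/-- Comparison operators `<, ≤, =, ≥, >`. -/
inductive CCmp | lt | le | eq | ge | gt

/-- Evaluation of a comparison operator on reals. -/
def CCmp.evalR : CCmp → ℝ → ℝ → Prop
  | .lt, a, b => a < b
  | .le, a, b => a ≤ b
  | .eq, a, b => a = b
  | .ge, a, b => a ≥ b
  | .gt, a, b => a > b

/-- Clock constraints over the clocks `x_1, …, x_k` (indexed by `Fin k`, clock
`x_{i+1}` for `i : Fin k`): Boolean combinations of `x_i - x_j # d` and `x_i # d`. -/
inductive CC (k : ℕ)
  | diff (i j : Fin k) (op : CCmp) (d : ℕ) : CC k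
  | single (i : Fin k) (op : CCmp) (d : ℕ) : CC k
  | not (c : CC k) : CC k
  | and (c₁ c₂ : CC k) : CC k

/-- `v ∈ c` : the valuation `v` satisfies the clock constraint `c`. -/
def CC.sat {k : ℕ} (v : Val k) : CC k → Prop
  | .diff i j op d => op.evalR (v i.succ - v j.succ) (d : ℝ)
  | .single i op d => op.evalR (v i.succ) (d : ℝ)
  | .not c => ¬ c.sat v
  | .and c₁ c₂ => c₁.sat v ∧ c₂.sat v

/-- The position (in `η`) of an index `x ∈ K⁰ ∪ K¹`. -/
def posOf {k : ℕ} (η : PatSeq k) (x : Fin (k+1) × Bool) : ℕ :=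
  η.findIdx fun p => decide (x ∈ p)

/-- The truth value, given by pattern `η`, of the fractional ordering
`fract(x_a) > fract(x_b)`. -/
def fracGtP {k : ℕ} (η : PatSeq k) (a b : Fin (k+1)) : Prop :=
  let i := posOf η ((0 : Fin (k+1)), true)
  let m₁ := posOf η (a, true)
  let m₂ := posOf η (b, true)
  (m₁ < i ∧ i ≤ m₂) ∨ (m₂ < m₁ ∧ m₁ < i) ∨ (i ≤ m₂ ∧ m₂ < m₁)

/-- The truth value, given by pattern `η`, of `fract(x_a) = fract(x_b)`. -/
def fracEqP {k : ℕ} (η : PatSeq k) (a b : Fin (k+1)) : Prop :=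
  posOf η (a, true) = posOf η (b, true)

/-- The truth value, given by pattern `η`, of `fract(x_a) = 0`. -/
def fracZeroP {k : ℕ} (η : PatSeq k) (a : Fin (k+1)) : Prop :=
  posOf η (a, true) = posOf η ((0 : Fin (k+1)), true)

/-- `u ∈ c^η` : the discrete valuation `u` satisfies the constraint `c^η`, obtained by
rewriting `c` as `I(c)` over integral parts and fractional orderings and substituting the
truth values of the fractional orderings determined by the pattern `η`. -/
def CC.satP {k : ℕ} (η : PatSeq k) (u : DVal k) : CC k → Prop
  | .diff i j op d =>
      let I : ℤ := (u i.succ : ℤ) - (u j.succ : ℤ)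
      (match op with
      | .lt => I < d ∨ (I = d ∧ fracGtP η j.succ i.succ)
      | .le => I < d ∨ (I = d ∧ (fracGtP η j.succ i.succ ∨ fracEqP η i.succ j.succ))
      | .eq => I = d ∧ fracEqP η i.succ j.succ
      | .ge => I > d ∨ (I = d ∧ (fracGtP η i.succ j.succ ∨ fracEqP η i.succ j.succ))
      | .gt => I > d ∨ (I = d ∧ fracGtP η i.succ j.succ))
  | .single i op d =>
      let I : ℤ := (u i.succ : ℤ)
      (match op with
      | .lt => I < d
      | .le => I < d ∨ (I = d ∧ fracZeroP η i.succ)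
      | .eq => I = d ∧ fracZeroP η i.succ
      | .ge => I ≥ d
      | .gt => I > d ∨ (I = d ∧ ¬ fracZeroP η i.succ))
  | .not c => ¬ c.satP η u
  | .and c₁ c₂ => c₁.satP η u ∧ c₂.satP η u

/-! ## Pushdown timed automata -/

/-- A pushdown timed automaton `⟨S, {x₁,…,x_k}, Inv, R, Γ, PD⟩`:
`Inv` assigns an invariant to each state, `R s s' = (Rc s s', Rr s s')` assigns a reset
condition and a set of clock resets (a subset of `K⁺`) to each edge, and
`PD s s' = (PDa s s', PDw s s')` assigns a stack operation to each edge. -/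
structure PTA (k : ℕ) (S : Type) (Γ : Type) where
  Inv : S → CC k
  Rc : S → S → CC k
  Rr : S → S → Finset (Fin (k+1))
  hRr : ∀ s s', (0 : Fin (k+1)) ∉ Rr s s'
  PDa : S → S → Γ
  PDw : S → S → List Γ

/-- A configuration `(s, v, w)` of a PTA. -/
abbrev Config (k : ℕ) (S Γ : Type) := S × Val k × List Γ

/-- The one-step transition relation `→_A` of a PTA. -/
def Step {k : ℕ} {S Γ : Type} (A : PTA k S Γ) (c₁ c₂ : Config k S Γ) : Prop :=
  -- progress transition
  (c₁.1 = c₂.1 ∧ c₁.2.2 = c₂.2.2 ∧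
    ∃ δ : ℝ, 0 < δ ∧ c₂.2.1 = shift c₁.2.1 δ ∧
      ∀ δ', 0 ≤ δ' → δ' ≤ δ → (A.Inv c₁.1).sat (shift c₁.2.1 δ')) ∨
  -- reset transition
  ((A.Inv c₁.1).sat c₁.2.1 ∧ (A.Rc c₁.1 c₂.1).sat c₁.2.1 ∧
    c₂.2.1 = resetVal (A.Rr c₁.1 c₂.1) c₁.2.1 ∧ (A.Inv c₂.1).sat c₂.2.1 ∧
    ∃ w : List Γ, c₁.2.2 = A.PDa c₁.1 c₂.1 :: w ∧ c₂.2.2 = A.PDw c₁.1 c₂.1 ++ w)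

/-- `→*_A`, the transitive closure of `→_A`. -/
def Reach {k : ℕ} {S Γ : Type} (A : PTA k S Γ) : Config k S Γ → Config k S Γ → Prop :=
  Relation.TransGen (Step A)

/-- `(s₀,u₀,w₀) →*_{A,η} (s₁,u₁,w₁)`. -/
def ReachPat {k : ℕ} {S Γ : Type} (A : PTA k S Γ) (η : PatSeq k)
    (s₀ : S) (u₀ : DVal k) (w₀ : List Γ) (s₁ : S) (u₁ : DVal k) (w₁ : List Γ) : Prop :=
  ∃ v₀ v₁ : Val k, IsVal v₀ ∧ IsVal v₁ ∧ v₀ 0 = 0 ∧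
    intPart v₀ = u₀ ∧ intPart v₁ = u₁ ∧ PatternOf v₀ v₁ η ∧
    Reach A (s₀, v₀, w₀) (s₁, v₁, w₁)

/-! ## The pattern graph -/

/-- A configuration `(s, η, u, w)` of the pattern graph. -/
abbrev GConfig (k : ℕ) (S Γ : Type) := S × PatSeq k × DVal k × List Γ

/-- The one-step transition relation `→_G` of the pattern graph `G` of a PTA `A`,
through progress edges, stay edges and reset edges. -/
def GStep {k : ℕ} {S Γ : Type} (A : PTA k S Γ) (c₁ c₂ : GConfig k S Γ) : Prop :=
  -- progress edge
  (c₁.1 = c₂.1 ∧ c₁.2.2.2 = c₂.2.2.2 ∧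
    nextPair c₁.2.1 c₁.2.2.1 = (c₂.2.1, c₂.2.2.1) ∧
    (A.Inv c₁.1).satP c₁.2.1 c₁.2.2.1 ∧ (A.Inv c₁.1).satP c₂.2.1 c₂.2.2.1) ∨
  -- stay edge
  (c₁ = c₂ ∧ IsMergePat c₁.2.1 ∧ (A.Inv c₁.1).satP c₁.2.1 c₁.2.2.1) ∨
  -- reset edge
  (resetPair (A.Rr c₁.1 c₂.1) c₁.2.1 c₁.2.2.1 = (c₂.2.1, c₂.2.2.1) ∧
    ((A.Rc c₁.1 c₂.1).and (A.Inv c₁.1)).satP c₁.2.1 c₁.2.2.1 ∧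
    (A.Inv c₂.1).satP c₂.2.1 c₂.2.2.1 ∧
    ∃ w : List Γ, c₁.2.2.2 = A.PDa c₁.1 c₂.1 :: w ∧ c₂.2.2.2 = A.PDw c₁.1 c₂.1 ++ w)

/-- `→*_G`, the transitive closure of `→_G`. -/
def GReach {k : ℕ} {S Γ : Type} (A : PTA k S Γ) : GConfig k S Γ → GConfig k S Γ → Prop :=
  Relation.TransGen (GStep A)

end PTApaper
namespace PTApaper

/-- Auxiliary: `L` lists the level sets of `f` in increasing order. -/
def Good {α : Type*} (f : α → ℝ) (L : List (Finset α)) : Prop :=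
  (∀ p ∈ L, p.Nonempty) ∧ (∀ p ∈ L, ∀ x ∈ p, ∀ y, y ∈ p ↔ f y = f x) ∧
  L.Pairwise (fun p q => ∀ x ∈ p, ∀ y ∈ q, f x < f y) ∧ (∀ x, ∃ p ∈ L, x ∈ p)

theorem Good.nodup {α : Type*} {f : α → ℝ} {L : List (Finset α)} (h : Good f L) : L.Nodup := by
  obtain ⟨h1, -, h3, -⟩ := h
  refine h3.imp_of_mem ?_
  intro p q hp hq hpq e
  obtain ⟨x, hx⟩ := h1 p hp
  exact lt_irrefl _ (hpq x hx x (e ▸ hx))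

theorem Good.sub {α : Type*} {f : α → ℝ} {L L' : List (Finset α)} (h : Good f L)
    (h' : Good f L') (p : Finset α) (hp : p ∈ L) : p ∈ L' := by
  obtain ⟨x, hx⟩ := h.1 p hp
  obtain ⟨q, hq, hxq⟩ := h'.2.2.2 x
  have : p = q := by
    ext y
    rw [h.2.1 p hp x hx y, h'.2.1 q hq x hxq y]
  exact this ▸ hq

theorem Good.unique {α : Type*} {f : α → ℝ} {L L' : List (Finset α)} (h : Good f L)
    (h' : Good f L') : L = L' := by
  have hperm : L.Perm L' := (List.perm_ext_iff_of_nodup h.nodup h'.nodup).2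
    fun p => ⟨h.sub h' p, h'.sub h p⟩
  refine List.Perm.eq_of_pairwise ?_ h.2.2.1 h'.2.2.1 hperm
  intro p q hp hq hpq hqp
  exfalso
  obtain ⟨x, hx⟩ := h.1 p hp
  obtain ⟨y, hy⟩ := h'.1 q hq
  exact lt_asymm (hpq x hx y hy) (hqp y hy x hx)

/-- Auxiliary: joint relative fractional part. -/
noncomputable def jf {k : ℕ} (v₀ v : Val k) (x : Fin (k+1) × Bool) : ℝ :=
  relFract (bval v₀ v x.2) x.1

theorem PatternOf.good {k : ℕ} {v₀ v : Val k} {η : PatSeq k} (h : PatternOf v₀ v η) :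
    Good (jf v₀ v) η := by
  obtain ⟨⟨_, hne, _, _, hcov⟩, hord⟩ := h
  refine ⟨hne, ?_, ?_, hcov⟩
  · intro p hp x hx y
    obtain ⟨m, rfl⟩ := List.get_of_mem hp
    obtain ⟨q, hq, hy⟩ := hcov y
    obtain ⟨m', rfl⟩ := List.get_of_mem hq
    have h1 := (hord m' m y.2 x.2 y.1 x.1 hy hx).1
    constructor
    · intro hy'
      exact (hord m m y.2 x.2 y.1 x.1 hy' hx).1.2 rfl
    · intro e
      have := h1.1 e
      exact this ▸ hy
  · rw [List.pairwise_iff_get]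
    intro m m' hmm x hx y hy
    exact (hord m m' x.2 y.2 x.1 y.1 hx hy).2.2 hmm

theorem jf_reset {k : ℕ} (v₀ v : Val k) (r : Finset (Fin (k+1))) (hr : (0 : Fin (k+1)) ∉ r)
    (x : Fin (k+1) × Bool) :
    jf v₀ (resetVal r v) x = if x ∈ r.image (fun j => (j, true)) then jf v₀ v (0, true)
      else jf v₀ v x := by
  obtain ⟨i, b⟩ := x
  cases b
  · simp [jf, bval]
  · by_cases hi : i ∈ r
    · have : i ≠ 0 := fun e => hr (e ▸ hi)
      simp [jf, bval, relFract, resetVal, hi, hr, this]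
    · simp [jf, bval, relFract, resetVal, hi, hr]

theorem ResetPat_eq {k : ℕ} {v₀ v : Val k} {η : PatSeq k} (h : Good (jf v₀ v) η)
    (r : Finset (Fin (k+1))) :
    ResetPat r η = (η.map (fun p => if ((0 : Fin (k+1)), true) ∈ p
      then p ∪ r.image (fun j => (j, true)) else p \ r.image (fun j => (j, true)))).filter
      (fun p => decide (p ≠ ∅)) := by
  unfold ResetPat
  simp only
  congr 1
  apply List.ext_getElem
  · simp
  · intro m h1 h2
    simp only [List.length_map] at h2
    simp only [List.getElem_mapIdx, List.getElem_map]
    have key : m = nowIdx η ↔ ((0 : Fin (k+1)), true) ∈ η[m] := by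
      obtain ⟨q, hq, hzq⟩ := h.2.2.2 ((0 : Fin (k+1)), true)
      have hlt : nowIdx η < η.length := List.findIdx_lt_length_of_exists ⟨q, hq, by simpa using hzq⟩
      have hmem : ((0 : Fin (k+1)), true) ∈ η[nowIdx η] := by
        have := List.findIdx_getElem (w := hlt)
        exact of_decide_eq_true this
      constructor
      · intro e
        subst e
        exact hmem
      · intro hm
        have hp := List.pairwise_iff_getElem.1 h.2.2.1
        rcases lt_trichotomy m (nowIdx η) with hlt' | e | hgt
        · exact absurd (hp _ _ h2 hlt hlt' _ hm _ hmem) (lt_irrefl _)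
        · exact e
        · exact absurd (hp _ _ hlt h2 hgt _ hmem _ hm) (lt_irrefl _)
    simp only [key]

theorem reset_good {k : ℕ} {v₀ v : Val k} {η : PatSeq k} (h : Good (jf v₀ v) η)
    (r : Finset (Fin (k+1))) (hr : (0 : Fin (k+1)) ∉ r) :
    Good (jf v₀ (resetVal r v)) (ResetPat r η) := by
  have hz : ((0 : Fin (k+1)), true) ∉ r.image (fun j => (j, true)) := by simpa using hr
  rw [ResetPat_eq h r]
  have hj := jf_reset v₀ v r hr
  generalize jf v₀ (resetVal r v) = f' at *
  generalize jf v₀ v = f at *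
  generalize r.image (fun j => (j, true)) = s at *
  generalize ((0 : Fin (k+1)), true) = z at *
  obtain ⟨h1, h2, h3, h4⟩ := h
  -- values on the new classes come from the old classes
  have hval : ∀ p ∈ η, ∀ x ∈ (if z ∈ p then p ∪ s else p \ s), ∃ y ∈ p, f' x = f y := by
    intro p hp x hx
    rw [hj]
    split_ifs at hx with hzp
    · by_cases hxs : x ∈ s
      · exact ⟨z, hzp, by simp [hxs]⟩
      · exact ⟨x, by simpa [hxs] using hx, by simp [hxs]⟩
    · rw [Finset.mem_sdiff] at hx
      exact ⟨x, hx.1, by simp [hx.2]⟩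
  refine ⟨?_, ?_, ?_, ?_⟩
  · intro p hp
    simp only [List.mem_filter, decide_eq_true_eq] at hp
    exact Finset.nonempty_iff_ne_empty.2 hp.2
  · intro p hp x hx y
    simp only [List.mem_filter, List.mem_map] at hp
    obtain ⟨⟨q, hq, rfl⟩, -⟩ := hp
    obtain ⟨w, hw, e⟩ := hval q hq x hx
    rw [e, hj]
    have hy := h2 q hq w hw y
    have hzz := h2 q hq w hw z
    by_cases hzq : z ∈ q <;> by_cases hys : y ∈ s <;> simp_all
  · refine List.Pairwise.filter _ ?_
    rw [List.pairwise_map]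
    refine h3.imp_of_mem ?_
    intro p q hp hq hpq x hx y hy
    obtain ⟨x', hx', e⟩ := hval p hp x hx
    obtain ⟨y', hy', e'⟩ := hval q hq y hy
    rw [e, e']
    exact hpq x' hx' y' hy'
  · intro x
    have : ∃ p ∈ η, x ∈ (if z ∈ p then p ∪ s else p \ s) := by
      by_cases hxs : x ∈ s
      · obtain ⟨p, hp, hzp⟩ := h4 z
        exact ⟨p, hp, by simp [hzp, hxs]⟩
      · obtain ⟨p, hp, hxp⟩ := h4 x
        refine ⟨p, hp, ?_⟩
        split_ifs <;> simp [hxp, hxs]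
    obtain ⟨p, hp, hx⟩ := this
    refine ⟨_, ?_, hx⟩
    simp only [List.mem_filter, List.mem_map, decide_eq_true_eq]
    exact ⟨⟨p, hp, rfl⟩, Finset.nonempty_iff_ne_empty.1 ⟨x, hx⟩⟩

/-- Lemma `resetpatternchange`. For any initialized pair `(v₀,v)` and
any set of clock resets `r ⊆ K⁺`: `reset_r([(v₀,v)], int(v)) = ([(v₀,v↓_r)], int(v↓_r))`. -/
theorem reset_pattern_change (k : ℕ) (hk : 1 ≤ k) (v₀ v : Val k)
    (hv₀ : IsVal v₀) (hv : IsVal v) (h0 : Initial v₀)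
    (r : Finset (Fin (k+1))) (hr : (0 : Fin (k+1)) ∉ r)
    (η η' : PatSeq k) (hη : PatternOf v₀ v η) (hη' : PatternOf v₀ (resetVal r v) η') :
    resetPair r η (intPart v) = (η', intPart (resetVal r v)) := by
  have e := (reset_good hη.good r hr).unique hη'.good
  unfold resetPair
  rw [e]
  congr 1
  funext j
  by_cases hj : j ∈ r <;> simp [resetD, intPart, resetVal, hj]

end PTApaper
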